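/- Under the stated setup and assumptions, for every p ∈ [1,∞] both (Σ_{j=1}^k sin^p θ_j')^{1/p} and (Σ_{j=1}^k sin^p ν_j')^{1/p} are bounded above by √2 · (γ_k^{2q}/(1−γ_k)) · (‖Σ_⊥‖_p/σ_k) · ‖Ω_2Ω_1†‖₂, where θ_j' and ν_j' are the canonical angles between the column spaces of U_k and Û_k, and of V_k and V̂_k, respectively. -/

import Mathlib

open scoped ENNReal
open Matrix

/-- The `j`-th largest singular value (0-indexed) of a complex matrix,
obtained as the decreasingly sorted square roots of the eigenvalues of `Mᴴ * M`. -/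
noncomputable def sval {m n : ℕ} (M : Matrix (Fin m) (Fin n) ℂ) (j : ℕ) : ℝ :=
  (List.insertionSort (· ≥ ·)
    ((List.ofFn (Matrix.isHermitian_conjTranspose_mul_self M).eigenvalues).map Real.sqrt)).getD j 0

/-- The Schatten-`p` norm (`p = ∞` gives the spectral norm). -/
noncomputable def schatten {m n : ℕ} (p : ℝ≥0∞) (M : Matrix (Fin m) (Fin n) ℂ) : ℝ :=
  if p = ⊤ then sval M 0
  else (∑ j ∈ Finset.range n, sval M j ^ p.toReal) ^ (1 / p.toReal)

/-- Moore–Penrose pseudoinverse of a full-row-rank matrix. -/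
noncomputable def rpinv {a b : ℕ} (M : Matrix (Fin a) (Fin b) ℂ) : Matrix (Fin b) (Fin a) ℂ :=
  Mᴴ * (M * Mᴴ)⁻¹

/-- Rectangular diagonal matrix with entries `σ (off), σ (off+1), …` on the diagonal. -/
noncomputable def diagRect (σ : ℕ → ℝ) (off a b : ℕ) : Matrix (Fin a) (Fin b) ℂ :=
  Matrix.of fun i j => if (i : ℕ) = (j : ℕ) then (σ (off + (i : ℕ)) : ℂ) else 0

/-- The first `b` columns of a matrix with `b + c` columns. -/
def colsL {a b c : ℕ} (M : Matrix (Fin a) (Fin (b + c)) ℂ) : Matrix (Fin a) (Fin b) ℂ :=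
  M.submatrix id (Fin.castAdd c)

/-- The last `c` columns of a matrix with `b + c` columns. -/
def colsR {a b c : ℕ} (M : Matrix (Fin a) (Fin (b + c)) ℂ) : Matrix (Fin a) (Fin c) ℂ :=
  M.submatrix id (Fin.natAdd b)

section SchattenNorm

open scoped Matrix.Norms.L2Operator ComplexOrder

/-- The square roots of the eigenvalues of `Mᴴ * M`, in the order of `eigenvalues`. -/
noncomputable def unsortedSval {m n : ℕ} (M : Matrix (Fin m) (Fin n) ℂ) (i : Fin n) : ℝ :=
  √((isHermitian_conjTranspose_mul_self M).eigenvalues i)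

lemma unsortedSval_nonneg {m n : ℕ} (M : Matrix (Fin m) (Fin n) ℂ) (i : Fin n) :
    0 ≤ unsortedSval M i := Real.sqrt_nonneg _

lemma sval_eq {m n : ℕ} (M : Matrix (Fin m) (Fin n) ℂ) (j : ℕ) :
    sval M j = (List.insertionSort (· ≥ ·) (List.ofFn (unsortedSval M))).getD j 0 := by
  rw [sval, List.map_ofFn]
  rfl

lemma sum_getD_range {l : List ℝ} (f : ℝ → ℝ) :
    ∑ j ∈ Finset.range l.length, f (l.getD j 0) = (l.map f).sum := by
  rw [Finset.sum_range, ← List.sum_ofFn]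
  congr 1
  apply List.ext_getElem <;> simp

lemma sum_sval {m n : ℕ} (M : Matrix (Fin m) (Fin n) ℂ) (f : ℝ → ℝ) :
    ∑ j ∈ Finset.range n, f (sval M j) = ∑ i, f (unsortedSval M i) := by
  have hl : (List.insertionSort (· ≥ ·) (List.ofFn (unsortedSval M))).length = n := by simp
  simp only [sval_eq]
  calc _ = ∑ j ∈ Finset.range (List.insertionSort (· ≥ ·) (List.ofFn (unsortedSval M))).length,
        f ((List.insertionSort (· ≥ ·) (List.ofFn (unsortedSval M))).getD j 0) := by rw [hl]
    _ = _ := by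
      rw [sum_getD_range, ((List.perm_insertionSort _ _).map f).sum_eq, List.map_ofFn,
        List.sum_ofFn]
      rfl

lemma sval_zero_eq_norm {m n : ℕ} (M : Matrix (Fin m) (Fin n) ℂ) :
    sval M 0 = ‖unsortedSval M‖ := by
  rw [sval_eq]
  have hs := List.pairwise_insertionSort (· ≥ ·) (List.ofFn (unsortedSval M))
  have hm : ∀ x, x ∈ List.insertionSort (· ≥ ·) (List.ofFn (unsortedSval M)) ↔
      ∃ i, unsortedSval M i = x := by
    intro x
    rw [List.mem_insertionSort, List.mem_ofFn]
  revert hs hm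
  generalize List.insertionSort (· ≥ ·) (List.ofFn (unsortedSval M)) = l
  intro hs hm
  cases l with
  | nil =>
    symm
    simp only [List.getD_nil, norm_eq_zero]
    funext i
    exact absurd ((hm _).2 ⟨i, rfl⟩) List.not_mem_nil
  | cons a l =>
    simp only [List.getD_cons_zero]
    obtain ⟨i, rfl⟩ := (hm a).1 List.mem_cons_self
    apply le_antisymm
    · exact (le_abs_self _).trans (norm_le_pi_norm (unsortedSval M) i)
    · refine (pi_norm_le_iff_of_nonneg (unsortedSval_nonneg M i)).2 fun j => ?_
      rw [Real.norm_of_nonneg (unsortedSval_nonneg M j)]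
      rcases List.mem_cons.1 ((hm _).2 ⟨j, rfl⟩) with h | h
      · exact h.le
      · exact (List.pairwise_cons.1 hs).1 _ h

lemma schatten_eq_norm {m n : ℕ} {p : ℝ≥0∞} (hp : 1 ≤ p) (M : Matrix (Fin m) (Fin n) ℂ) :
    schatten p M = ‖WithLp.toLp p (unsortedSval M)‖ := by
  rw [schatten]
  split_ifs with h
  · subst h
    rw [PiLp.norm_toLp, sval_zero_eq_norm]
  · have h0 : 0 < p.toReal := ENNReal.toReal_pos (by positivity) h
    rw [PiLp.norm_eq_sum h0, sum_sval M (fun x => x ^ p.toReal)]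
    simp [abs_of_nonneg (unsortedSval_nonneg M _)]

lemma schatten_nonneg {m n : ℕ} {p : ℝ≥0∞} (hp : 1 ≤ p) (M : Matrix (Fin m) (Fin n) ℂ) :
    0 ≤ schatten p M := by
  have : Fact (1 ≤ p) := ⟨hp⟩
  rw [schatten_eq_norm hp]
  exact norm_nonneg _

/-- Sub-doubly-stochastic averaging does not increase `ℓᵖ` norms. -/
lemma norm_toLp_le_of_substochastic {ι κ : Type*} [Fintype ι] [Fintype κ] {p : ℝ≥0∞} (hp : 1 ≤ p)
    (x : ι → ℂ) (s : κ → ℝ) (c : ι → κ → ℝ) (hs : ∀ j, 0 ≤ s j) (hc : ∀ i j, 0 ≤ c i j)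
    (hrow : ∀ i, ∑ j, c i j ≤ 1) (hcol : ∀ j, ∑ i, c i j ≤ 1)
    (hx : ∀ i, ‖x i‖ ≤ ∑ j, c i j * s j) :
    ‖WithLp.toLp p x‖ ≤ ‖WithLp.toLp p s‖ := by
  by_cases h : p = ⊤
  · subst h
    rw [PiLp.norm_toLp, PiLp.norm_toLp]
    refine (pi_norm_le_iff_of_nonneg (norm_nonneg _)).2 fun i => (hx i).trans ?_
    calc ∑ j, c i j * s j ≤ ∑ j, c i j * ‖s‖ := by
          gcongr with j
          · exact hc i j
          · exact (le_abs_self _).trans (norm_le_pi_norm s j)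
      _ = (∑ j, c i j) * ‖s‖ := by rw [Finset.sum_mul]
      _ ≤ 1 * ‖s‖ := by gcongr; exact hrow i
      _ = ‖s‖ := one_mul _
  · have h1 : 1 ≤ p.toReal := by
      rw [← ENNReal.toReal_one]
      exact (ENNReal.toReal_le_toReal ENNReal.one_ne_top h).2 hp
    have h0 : 0 < p.toReal := by linarith
    rw [PiLp.norm_eq_sum h0, PiLp.norm_eq_sum h0]
    refine Real.rpow_le_rpow (by positivity) ?_ (by positivity)
    calc ∑ i, ‖x i‖ ^ p.toReal ≤ ∑ i, ∑ j, c i j * s j ^ p.toReal := by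
          refine Finset.sum_le_sum fun i _ => ?_
          have hw := Real.inner_le_weight_mul_Lp_of_nonneg Finset.univ h1 (c i) s (hc i) hs
          have hnn : 0 ≤ ∑ j, c i j * s j ^ p.toReal :=
            Finset.sum_nonneg fun j _ => mul_nonneg (hc i j) (Real.rpow_nonneg (hs j) _)
          have hle : ‖x i‖ ≤ (∑ j, c i j * s j ^ p.toReal) ^ (p.toReal)⁻¹ := by
            refine ((hx i).trans hw).trans ?_
            refine mul_le_of_le_one_left (Real.rpow_nonneg hnn _) ?_
            refine Real.rpow_le_one (Finset.sum_nonneg fun j _ => hc i j) (hrow i) ?_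
            rw [sub_nonneg]
            exact inv_le_one_of_one_le₀ h1
          calc ‖x i‖ ^ p.toReal
              ≤ ((∑ j, c i j * s j ^ p.toReal) ^ (p.toReal)⁻¹) ^ p.toReal := by gcongr
            _ = _ := Real.rpow_inv_rpow hnn h0.ne'
      _ = ∑ j, (∑ i, c i j) * s j ^ p.toReal := by
          rw [Finset.sum_comm]
          simp only [Finset.sum_mul]
      _ ≤ ∑ j, 1 * s j ^ p.toReal := by
          refine Finset.sum_le_sum fun j _ => ?_
          exact mul_le_mul_of_nonneg_right (hcol j) (Real.rpow_nonneg (hs j) _)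
      _ = ∑ j, ‖s j‖ ^ p.toReal := by
          simp [abs_of_nonneg (hs _)]

lemma sum_norm_sq_col_le {m n : Type*} [Fintype m] [Fintype n] [DecidableEq n]
    (M : Matrix m n ℂ) (hM : ‖M‖ ≤ 1) (j : n) : ∑ i, ‖M i j‖ ^ 2 ≤ 1 := by
  have h := l2_opNorm_mulVec M (EuclideanSpace.single j 1)
  rw [PiLp.norm_single, norm_one, mul_one] at h
  have h2 : ‖(EuclideanSpace.equiv m ℂ).symm (M *ᵥ (EuclideanSpace.single j (1 : ℂ)))‖ ^ 2 ≤ 1 := by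
    have := norm_nonneg ((EuclideanSpace.equiv m ℂ).symm (M *ᵥ (EuclideanSpace.single j (1 : ℂ))))
    nlinarith
  rw [EuclideanSpace.norm_sq_eq] at h2
  simpa using h2

lemma sum_norm_sq_row_le {m n : Type*} [Fintype m] [Fintype n] [DecidableEq m] [DecidableEq n]
    (M : Matrix m n ℂ) (hM : ‖M‖ ≤ 1) (i : m) : ∑ j, ‖M i j‖ ^ 2 ≤ 1 := by
  simpa using sum_norm_sq_col_le Mᴴ (by rwa [l2_opNorm_conjTranspose]) i

lemma sum_norm_mul_norm_le_one {ι : Type*} [Fintype ι] (f g : ι → ℂ)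
    (hf : ∑ i, ‖f i‖ ^ 2 ≤ 1) (hg : ∑ i, ‖g i‖ ^ 2 ≤ 1) : ∑ i, ‖f i‖ * ‖g i‖ ≤ 1 := by
  have : ∀ i, ‖f i‖ * ‖g i‖ ≤ (‖f i‖ ^ 2 + ‖g i‖ ^ 2) / 2 := fun i => by
    nlinarith [sq_nonneg (‖f i‖ - ‖g i‖)]
  calc _ ≤ ∑ i, (‖f i‖ ^ 2 + ‖g i‖ ^ 2) / 2 := Finset.sum_le_sum fun i _ => this i
    _ = (∑ i, ‖f i‖ ^ 2 + ∑ i, ‖g i‖ ^ 2) / 2 := by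
      rw [← Finset.sum_div, Finset.sum_add_distrib]
    _ ≤ 1 := by linarith

lemma l2_opNorm_one_le {n : Type*} [Fintype n] [DecidableEq n] : ‖(1 : Matrix n n ℂ)‖ ≤ 1 := by
  rw [← diagonal_one, l2_opNorm_diagonal]
  exact (pi_norm_le_iff_of_nonneg zero_le_one).2 fun i => by simp

lemma l2_opNorm_le_one_of_conjTranspose_mul_self {m n : Type*} [Fintype m] [Fintype n]
    [DecidableEq n] {M : Matrix m n ℂ} (h : Mᴴ * M = 1) : ‖M‖ ≤ 1 := by
  have h1 := l2_opNorm_conjTranspose_mul_self M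
  rw [h] at h1
  have := l2_opNorm_one_le (n := n)
  nlinarith [norm_nonneg M]

/-- A singular value decomposition whose left factor is a contraction. -/
lemma exists_svd {m n : ℕ} (M : Matrix (Fin m) (Fin n) ℂ) :
    ∃ (W : Matrix (Fin m) (Fin n) ℂ) (Z : Matrix (Fin n) (Fin n) ℂ), ‖W‖ ≤ 1 ∧ ‖Z‖ ≤ 1 ∧
      M = W * diagonal (fun i => (unsortedSval M i : ℂ)) * Zᴴ ∧
      Wᴴ * M * Z = diagonal (fun i => (unsortedSval M i : ℂ)) := by
  have hH := isHermitian_conjTranspose_mul_self M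
  set s := unsortedSval M with hs
  set Z : Matrix (Fin n) (Fin n) ℂ := (hH.eigenvectorUnitary : Matrix (Fin n) (Fin n) ℂ) with hZ
  have hZ1 : Zᴴ * Z = 1 := Unitary.coe_star_mul_self hH.eigenvectorUnitary
  have hZ2 : Z * Zᴴ = 1 := Unitary.coe_mul_star_self hH.eigenvectorUnitary
  have hev : ∀ i, (s i : ℂ) * s i = (hH.eigenvalues i : ℂ) := fun i => by
    rw [← Complex.ofReal_mul]
    congr 1
    exact Real.mul_self_sqrt (eigenvalues_conjTranspose_mul_self_nonneg M i)
  have hspec : Zᴴ * (Mᴴ * M) * Z = diagonal (fun i => (s i : ℂ) * s i) := by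
    have h := hH.conjStarAlgAut_star_eigenvectorUnitary
    rw [Unitary.conjStarAlgAut_star_apply] at h
    simp only [hev]
    exact h
  set D := diagonal (fun i => (s i : ℂ)) with hD
  set E := diagonal (fun i => ((s i)⁻¹ : ℂ)) with hE
  have hDH : Dᴴ = D := by
    rw [hD, diagonal_conjTranspose]
    congr 1
    funext i
    simp
  have hEH : Eᴴ = E := by
    rw [hE, diagonal_conjTranspose]
    congr 1
    funext i
    simp
  have hDD : Zᴴ * (Mᴴ * M) * Z = D * D := by rw [hspec, hD, diagonal_mul_diagonal]
  have hEDD : E * (D * D) = D := by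
    rw [hE, hD, diagonal_mul_diagonal, diagonal_mul_diagonal]
    congr 1
    funext i
    by_cases h : (s i : ℂ) = 0
    · simp [h]
    · field_simp
  have hMZ : M * Z * (1 - E * D) = 0 := by
    apply conjTranspose_mul_self_eq_zero.1
    have : (1 - E * D)ᴴ = 1 - D * E := by
      rw [conjTranspose_sub, conjTranspose_mul, hDH, hEH, conjTranspose_one]
    rw [conjTranspose_mul, conjTranspose_mul, this]
    calc (1 - D * E) * (Zᴴ * Mᴴ) * (M * Z * (1 - E * D))
        = (1 - D * E) * (Zᴴ * (Mᴴ * M) * Z) * (1 - E * D) := by simp only [Matrix.mul_assoc]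
      _ = D * D * (1 - E * D) - D * (E * (D * D)) * (1 - E * D) := by
        rw [hDD]; noncomm_ring
      _ = 0 := by rw [hEDD, sub_self]
  refine ⟨M * Z * E, Z, ?_, l2_opNorm_le_one_of_conjTranspose_mul_self hZ1, ?_, ?_⟩
  · have h1 := l2_opNorm_conjTranspose_mul_self (M * Z * E)
    have h2 : (M * Z * E)ᴴ * (M * Z * E) = D * E := by
      rw [conjTranspose_mul, conjTranspose_mul, hEH]
      calc E * (Zᴴ * Mᴴ) * (M * Z * E) = E * (Zᴴ * (Mᴴ * M) * Z) * E := by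
            simp only [Matrix.mul_assoc]
        _ = D * E := by rw [hDD, hEDD]
    have h3 : ‖D * E‖ ≤ 1 := by
      rw [hD, hE, diagonal_mul_diagonal, l2_opNorm_diagonal]
      refine (pi_norm_le_iff_of_nonneg zero_le_one).2 fun i => ?_
      by_cases h : (s i : ℂ) = 0
      · simp [h]
      · rw [mul_inv_cancel₀ h, norm_one]
    rw [h2] at h1
    nlinarith [norm_nonneg (M * Z * E)]
  · have h1 : M * Z = M * Z * E * D := by
      rw [Matrix.mul_sub, Matrix.mul_one, sub_eq_zero] at hMZ
      rw [Matrix.mul_assoc (M * Z)]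
      exact hMZ
    rw [← h1, Matrix.mul_assoc, hZ2, Matrix.mul_one]
  · rw [conjTranspose_mul, conjTranspose_mul, hEH]
    calc E * (Zᴴ * Mᴴ) * M * Z = E * (Zᴴ * (Mᴴ * M) * Z) := by simp only [Matrix.mul_assoc]
      _ = D := by rw [hDD, hEDD]

lemma norm_diag_le_schatten_of_le_one {m n : ℕ} {ι : Type*} [Fintype ι] [DecidableEq ι]
    {p : ℝ≥0∞} (hp : 1 ≤ p) (M : Matrix (Fin m) (Fin n) ℂ)
    (W : Matrix (Fin m) ι ℂ) (Z : Matrix (Fin n) ι ℂ) (hW : ‖W‖ ≤ 1) (hZ : ‖Z‖ ≤ 1) :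
    ‖WithLp.toLp p (fun i => (Wᴴ * M * Z) i i)‖ ≤ schatten p M := by
  obtain ⟨W₀, Z₀, hW₀, hZ₀, hM, -⟩ := exists_svd M
  rw [schatten_eq_norm hp]
  set s := unsortedSval M
  set F := Wᴴ * W₀ with hF
  set G := Z₀ᴴ * Z with hG
  have hF1 : ‖F‖ ≤ 1 := (l2_opNorm_mul _ _).trans
    (mul_le_one₀ (by rwa [l2_opNorm_conjTranspose]) (norm_nonneg _) hW₀)
  have hG1 : ‖G‖ ≤ 1 := (l2_opNorm_mul _ _).trans
    (mul_le_one₀ (by rwa [l2_opNorm_conjTranspose]) (norm_nonneg _) hZ)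
  have hprod : Wᴴ * M * Z = F * diagonal (fun i => (s i : ℂ)) * G := by
    rw [hM]
    simp only [hF, hG, Matrix.mul_assoc]
  refine norm_toLp_le_of_substochastic hp _ s (fun i j => ‖F i j‖ * ‖G j i‖)
    (unsortedSval_nonneg M) (fun i j => by positivity) (fun i => ?_) (fun j => ?_) (fun i => ?_)
  · exact sum_norm_mul_norm_le_one (fun j => F i j) (fun j => G j i)
      (sum_norm_sq_row_le F hF1 i) (sum_norm_sq_col_le G hG1 i)
  · exact sum_norm_mul_norm_le_one (fun i => F i j) (fun i => G j i)
      (sum_norm_sq_col_le F hF1 j) (sum_norm_sq_row_le G hG1 j)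
  · rw [hprod, mul_apply]
    refine (norm_sum_le _ _).trans (Finset.sum_le_sum fun j _ => le_of_eq ?_)
    have hsj : ‖(s j : ℂ)‖ = s j := by
      rw [Complex.norm_real, Real.norm_of_nonneg (unsortedSval_nonneg M j)]
    rw [mul_diagonal, norm_mul, norm_mul, hsj]
    ring

lemma schatten_le_of_forall {m n : ℕ} {p : ℝ≥0∞} (hp : 1 ≤ p) (M : Matrix (Fin m) (Fin n) ℂ)
    {t : ℝ} (h : ∀ (W : Matrix (Fin m) (Fin n) ℂ) (Z : Matrix (Fin n) (Fin n) ℂ), ‖W‖ ≤ 1 →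
      ‖Z‖ ≤ 1 → ‖WithLp.toLp p (fun i => (Wᴴ * M * Z) i i)‖ ≤ t) : schatten p M ≤ t := by
  have : Fact (1 ≤ p) := ⟨hp⟩
  obtain ⟨W, Z, hW, hZ, -, hD⟩ := exists_svd M
  refine le_trans (le_of_eq ?_) (h W Z hW hZ)
  rw [schatten_eq_norm hp, hD]
  simp only [diagonal_apply_eq]
  by_cases ht : p = ⊤
  · subst ht
    simp only [PiLp.norm_toLp, Pi.norm_def]
    simp
  · have h0 : 0 < p.toReal := ENNReal.toReal_pos (by positivity) ht
    rw [PiLp.norm_eq_sum h0, PiLp.norm_eq_sum h0]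
    simp

lemma schatten_add_le {m n : ℕ} {p : ℝ≥0∞} (hp : 1 ≤ p) (M N : Matrix (Fin m) (Fin n) ℂ) :
    schatten p (M + N) ≤ schatten p M + schatten p N := by
  have : Fact (1 ≤ p) := ⟨hp⟩
  refine schatten_le_of_forall hp _ fun W Z hW hZ => ?_
  have : WithLp.toLp p (fun i => (Wᴴ * (M + N) * Z) i i) =
      WithLp.toLp p (fun i => (Wᴴ * M * Z) i i) + WithLp.toLp p (fun i => (Wᴴ * N * Z) i i) := by
    rw [← WithLp.toLp_add]
    congr 1
    funext i
    simp [Matrix.mul_add, Matrix.add_mul]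
  rw [this]
  exact (norm_add_le _ _).trans (add_le_add (norm_diag_le_schatten_of_le_one hp M W Z hW hZ)
    (norm_diag_le_schatten_of_le_one hp N W Z hW hZ))

lemma exists_smul_contraction {m n : Type*} [Fintype m] [Fintype n] [DecidableEq n]
    (M : Matrix m n ℂ) :
    ∃ M' : Matrix m n ℂ, ‖M'‖ ≤ 1 ∧ M = (‖M‖ : ℂ) • M' := by
  by_cases h : ‖M‖ = 0
  · exact ⟨0, by simp, by simp [norm_eq_zero.1 h]⟩
  · refine ⟨(‖M‖⁻¹ : ℂ) • M, ?_, ?_⟩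
    · rw [norm_smul, norm_inv, Complex.norm_real, norm_norm, inv_mul_cancel₀ h]
    · rw [smul_smul, mul_inv_cancel₀ (by exact_mod_cast h), one_smul]

lemma schatten_mul_mul_le {a b c d : ℕ} {p : ℝ≥0∞} (hp : 1 ≤ p) (B : Matrix (Fin a) (Fin b) ℂ)
    (C : Matrix (Fin b) (Fin c) ℂ) (D : Matrix (Fin c) (Fin d) ℂ) :
    schatten p (B * C * D) ≤ ‖B‖ * schatten p C * ‖D‖ := by
  have : Fact (1 ≤ p) := ⟨hp⟩
  obtain ⟨B', hB', hB⟩ := exists_smul_contraction B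
  obtain ⟨D', hD', hD⟩ := exists_smul_contraction D
  refine schatten_le_of_forall hp _ fun W Z hW hZ => ?_
  have : WithLp.toLp p (fun i => (Wᴴ * (B * C * D) * Z) i i) =
      ((‖B‖ : ℂ) * (‖D‖ : ℂ)) •
        WithLp.toLp p (fun i => ((B'ᴴ * W)ᴴ * C * (D' * Z)) i i) := by
    rw [← WithLp.toLp_smul]
    congr 1
    funext i
    have : Wᴴ * (B * C * D) * Z =
        ((‖B‖ : ℂ) * (‖D‖ : ℂ)) • ((B'ᴴ * W)ᴴ * C * (D' * Z)) := by
      nth_rewrite 1 [hB, hD]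
      simp only [conjTranspose_mul, conjTranspose_conjTranspose, Matrix.mul_assoc,
        Matrix.smul_mul, Matrix.mul_smul, smul_smul]
      rw [mul_comm]
    rw [this]
    rfl
  rw [this, norm_smul, norm_mul, Complex.norm_real, Complex.norm_real, norm_norm, norm_norm]
  have h1 : ‖B'ᴴ * W‖ ≤ 1 := (l2_opNorm_mul _ _).trans
    (mul_le_one₀ (by rwa [l2_opNorm_conjTranspose]) (norm_nonneg _) hW)
  have h2 : ‖D' * Z‖ ≤ 1 := (l2_opNorm_mul _ _).trans (mul_le_one₀ hD' (norm_nonneg _) hZ)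
  calc _ ≤ ‖B‖ * ‖D‖ * schatten p C := by
        gcongr
        exact norm_diag_le_schatten_of_le_one hp C _ _ h1 h2
    _ = _ := by ring

lemma schatten_mul_le_left {a b c : ℕ} {p : ℝ≥0∞} (hp : 1 ≤ p) (B : Matrix (Fin a) (Fin b) ℂ)
    (C : Matrix (Fin b) (Fin c) ℂ) : schatten p (B * C) ≤ ‖B‖ * schatten p C := by
  have h := schatten_mul_mul_le hp B C (1 : Matrix (Fin c) (Fin c) ℂ)
  rw [Matrix.mul_one] at h
  refine h.trans (mul_le_of_le_one_right ?_ l2_opNorm_one_le)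
  exact mul_nonneg (norm_nonneg _) (schatten_nonneg hp C)

lemma schatten_mul_le_right {a b c : ℕ} {p : ℝ≥0∞} (hp : 1 ≤ p) (C : Matrix (Fin a) (Fin b) ℂ)
    (D : Matrix (Fin b) (Fin c) ℂ) : schatten p (C * D) ≤ schatten p C * ‖D‖ := by
  have h := schatten_mul_mul_le hp (1 : Matrix (Fin a) (Fin a) ℂ) C D
  rw [Matrix.one_mul] at h
  refine h.trans (mul_le_mul_of_nonneg_right ?_ (norm_nonneg _))
  exact mul_le_of_le_one_left (schatten_nonneg hp C) l2_opNorm_one_le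

lemma schatten_conjTranspose_le {m n : ℕ} {p : ℝ≥0∞} (hp : 1 ≤ p)
    (M : Matrix (Fin m) (Fin n) ℂ) : schatten p Mᴴ ≤ schatten p M := by
  refine schatten_le_of_forall hp _ fun W Z hW hZ => ?_
  refine le_trans (le_of_eq ?_) (norm_diag_le_schatten_of_le_one hp M Z W hZ hW)
  have h : ∀ i, ‖(Wᴴ * Mᴴ * Z) i i‖ = ‖(Zᴴ * M * W) i i‖ := fun i => by
    have : Wᴴ * Mᴴ * Z = (Zᴴ * M * W)ᴴ := by
      simp only [conjTranspose_mul, conjTranspose_conjTranspose, Matrix.mul_assoc]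
    rw [this, conjTranspose_apply, norm_star]
  by_cases ht : p = ⊤
  · subst ht
    simp only [PiLp.norm_eq_ciSup, h]
  · have h0 : 0 < p.toReal := ENNReal.toReal_pos (by positivity) ht
    simp only [PiLp.norm_eq_sum h0, h]

lemma l2_opNorm_le_sval_zero {m n : ℕ} (M : Matrix (Fin m) (Fin n) ℂ) : ‖M‖ ≤ sval M 0 := by
  obtain ⟨W, Z, hW, hZ, hM, -⟩ := exists_svd M
  have hD : ‖diagonal (fun i => (unsortedSval M i : ℂ))‖ = sval M 0 := by
    rw [l2_opNorm_diagonal, sval_zero_eq_norm, Pi.norm_def, Pi.norm_def]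
    simp
  have h0 : 0 ≤ sval M 0 := by rw [← hD]; exact norm_nonneg _
  calc ‖M‖ = ‖W * diagonal (fun i => (unsortedSval M i : ℂ)) * Zᴴ‖ := by rw [← hM]
    _ ≤ ‖W‖ * ‖diagonal (fun i => (unsortedSval M i : ℂ))‖ * ‖Zᴴ‖ :=
      (l2_opNorm_mul _ _).trans (mul_le_mul_of_nonneg_right (l2_opNorm_mul _ _) (norm_nonneg _))
    _ ≤ 1 * sval M 0 * 1 := by
      rw [hD, l2_opNorm_conjTranspose]
      gcongr
    _ = sval M 0 := by ring

end SchattenNorm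

section Columns

open scoped Matrix.Norms.L2Operator ComplexOrder

lemma conjTranspose_colsL_mul_colsL {a b c : ℕ} {M : Matrix (Fin a) (Fin (b + c)) ℂ}
    (h : Mᴴ * M = 1) : (colsL M)ᴴ * colsL M = 1 := by
  have : (colsL M)ᴴ * colsL M = (Mᴴ * M).submatrix (Fin.castAdd c) (Fin.castAdd c) := by
    ext i j
    simp [colsL, mul_apply]
  rw [this, h, submatrix_one _ (Fin.castAdd_injective b c)]

lemma conjTranspose_colsR_mul_colsR {a b c : ℕ} {M : Matrix (Fin a) (Fin (b + c)) ℂ}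
    (h : Mᴴ * M = 1) : (colsR M)ᴴ * colsR M = 1 := by
  have : (colsR M)ᴴ * colsR M = (Mᴴ * M).submatrix (Fin.natAdd b) (Fin.natAdd b) := by
    ext i j
    simp [colsR, mul_apply]
  rw [this, h, submatrix_one _ (Fin.natAdd_injective c b)]

lemma conjTranspose_colsL_mul_colsR {a b c : ℕ} {M : Matrix (Fin a) (Fin (b + c)) ℂ}
    (h : Mᴴ * M = 1) : (colsL M)ᴴ * colsR M = 0 := by
  have : (colsL M)ᴴ * colsR M = (Mᴴ * M).submatrix (Fin.castAdd c) (Fin.natAdd b) := by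
    ext i j
    simp [colsL, colsR, mul_apply]
  rw [this, h]
  ext i j
  rw [submatrix_apply, one_apply_ne, Matrix.zero_apply]
  intro hij
  have := congrArg Fin.val hij
  simp only [Fin.val_castAdd, Fin.val_natAdd] at this
  omega

lemma conjTranspose_colsR_mul_colsL {a b c : ℕ} {M : Matrix (Fin a) (Fin (b + c)) ℂ}
    (h : Mᴴ * M = 1) : (colsR M)ᴴ * colsL M = 0 := by
  have h' := congrArg conjTranspose (conjTranspose_colsL_mul_colsR h)
  rwa [conjTranspose_mul, conjTranspose_conjTranspose, conjTranspose_zero] at h'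

lemma mul_diagRect_mul_conjTranspose {a b k c d : ℕ} (M : Matrix (Fin a) (Fin (k + c)) ℂ)
    (N : Matrix (Fin b) (Fin (k + d)) ℂ) (σ : ℕ → ℝ) :
    M * diagRect σ 0 (k + c) (k + d) * Nᴴ =
      colsL M * diagonal (fun i : Fin k => (σ i : ℂ)) * (colsL N)ᴴ +
        colsR M * diagRect σ k c d * (colsR N)ᴴ := by
  have h1 : ∀ (x : Fin k) (y : ℕ), ¬ ((x : ℕ) = k + y) := fun x y => by omega
  have h2 : ∀ (x : Fin k) (y : ℕ), ¬ (k + y = (x : ℕ)) := fun x y => by omega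
  ext i j
  simp [mul_apply, Fin.sum_univ_add, diagRect, colsL, colsR, h1, h2, diagonal_apply, Fin.ext_iff]

lemma l2_opNorm_diagRect_le {σ : ℕ → ℝ} (hσ0 : ∀ i, 0 ≤ σ i) (hσm : ∀ i j, i ≤ j → σ j ≤ σ i)
    (off a b : ℕ) : ‖diagRect σ off a b‖ ≤ σ off := by
  have h : (diagRect σ off a b)ᴴ * diagRect σ off a b =
      diagonal (fun j : Fin b => if (j : ℕ) < a then ((σ (off + j) ^ 2 : ℝ) : ℂ) else 0) := by
    ext i j
    rw [mul_apply]
    simp only [conjTranspose_apply, diagRect, of_apply, diagonal_apply]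
    by_cases hi : (i : ℕ) < a
    · rw [Finset.sum_eq_single ⟨i, hi⟩]
      · by_cases hij : i = j
        · subst hij
          simp [hi, sq]
        · have : (i : ℕ) ≠ j := fun h => hij (Fin.ext h)
          simp [hij, this]
      · intro x _ hx
        have : (x : ℕ) ≠ i := fun h => hx (Fin.ext h)
        simp [this]
      · simp
    · rw [Finset.sum_eq_zero]
      · simp [hi]
      · intro x _
        have : (x : ℕ) ≠ i := by omega
        simp [this]
  have h1 := l2_opNorm_conjTranspose_mul_self (diagRect σ off a b)
  have h2 : ‖(diagRect σ off a b)ᴴ * diagRect σ off a b‖ ≤ σ off ^ 2 := by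
    rw [h, l2_opNorm_diagonal]
    refine (pi_norm_le_iff_of_nonneg (sq_nonneg _)).2 fun j => ?_
    split_ifs
    · rw [Complex.norm_real, Real.norm_of_nonneg (sq_nonneg _)]
      exact pow_le_pow_left₀ (hσ0 _) (hσm _ _ (Nat.le_add_right _ _)) 2
    · simpa using sq_nonneg _
  rw [h1, ← sq] at h2
  exact le_of_sq_le_sq h2 (hσ0 _)

lemma mul_rpinv {a b : ℕ} {M : Matrix (Fin a) (Fin b) ℂ} (h : M.rank = a) : M * rpinv M = 1 := by
  rw [← rank_self_mul_conjTranspose] at h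
  have hu : IsUnit (M * Mᴴ) := by
    rw [← mulVec_surjective_iff_isUnit]
    have : LinearMap.range (M * Mᴴ).mulVecLin = ⊤ :=
      Submodule.eq_top_of_finrank_eq (h.trans (by simp))
    exact LinearMap.range_eq_top.1 this
  rw [rpinv, ← Matrix.mul_assoc, mul_nonsing_inv _ ((isUnit_iff_isUnit_det _).1 hu)]

lemma l2_opNorm_one_sub_mul_conjTranspose_le {m n : Type*} [Fintype m] [Fintype n]
    [DecidableEq m] [DecidableEq n] {M : Matrix m n ℂ} (h : Mᴴ * M = 1) :
    ‖1 - M * Mᴴ‖ ≤ 1 := by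
  have h1 := l2_opNorm_conjTranspose_mul_self (1 - M * Mᴴ)
  have h2 : (1 - M * Mᴴ)ᴴ * (1 - M * Mᴴ) = 1 - M * Mᴴ := by
    have h3 : M * Mᴴ * (M * Mᴴ) = M * Mᴴ := by
      rw [Matrix.mul_assoc, ← Matrix.mul_assoc Mᴴ, h, Matrix.one_mul]
    simp only [conjTranspose_sub, conjTranspose_one, conjTranspose_mul,
      conjTranspose_conjTranspose]
    rw [Matrix.sub_mul, Matrix.one_mul, Matrix.mul_sub, Matrix.mul_one, h3, sub_self, sub_zero]
  rw [h2] at h1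
  by_contra hlt
  push Not at hlt
  nlinarith

lemma l2_opNorm_mul_le_of_le_one_left {m n l : Type*} [Fintype m] [Fintype n] [Fintype l]
    [DecidableEq n] [DecidableEq l] (M : Matrix m n ℂ) (N : Matrix n l ℂ) (h : ‖M‖ ≤ 1) :
    ‖M * N‖ ≤ ‖N‖ :=
  (l2_opNorm_mul M N).trans (mul_le_of_le_one_left (norm_nonneg _) h)

lemma l2_opNorm_mul_le_of_le_one_right {m n l : Type*} [Fintype m] [Fintype n] [Fintype l]
    [DecidableEq n] [DecidableEq l] (M : Matrix m n ℂ) (N : Matrix n l ℂ) (h : ‖N‖ ≤ 1) :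
    ‖M * N‖ ≤ ‖M‖ :=
  (l2_opNorm_mul M N).trans (mul_le_of_le_one_right (norm_nonneg _) h)

lemma exists_ne_zero_mul_eq_zero {k : ℕ} (K : Matrix (Fin k) (Fin (k + 1)) ℂ) :
    ∃ z : Matrix (Fin (k + 1)) (Fin 1) ℂ, z ≠ 0 ∧ K * z = 0 := by
  have hker : LinearMap.ker K.mulVecLin ≠ ⊥ :=
    LinearMap.ker_ne_bot_of_finrank_lt (by simp)
  obtain ⟨v, hv, hv0⟩ := Submodule.exists_mem_ne_zero_of_ne_bot hker
  refine ⟨replicateCol (Fin 1) v, fun h => hv0 ?_, ?_⟩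
  · funext i
    exact congrFun (congrFun h i) 0
  · rw [← replicateCol_mulVec]
    have : K *ᵥ v = 0 := hv
    rw [this]
    rfl

/-- Interlacing: compressing a matrix with a tail of norm at most `t` beyond its leading rank-`k`
part produces a `(k+1)`-st singular value at most `t`. -/
lemma compressed_sval_le {m n k l : ℕ} {A : Matrix (Fin m) (Fin n) ℂ}
    {Q : Matrix (Fin m) (Fin l) ℂ} {UB : Matrix (Fin l) (Fin l) ℂ} {Vh : Matrix (Fin n) (Fin l) ℂ}
    {σh : ℕ → ℝ} (hkl : k + 1 ≤ l) (Vk : Matrix (Fin n) (Fin k) ℂ) (C : Matrix (Fin m) (Fin k) ℂ)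
    (T : Matrix (Fin m) (Fin n) ℂ) (hA : A = C * Vkᴴ + T) (hQ : Qᴴ * Q = 1)
    (hUB : UBᴴ * UB = 1) (hVh : Vhᴴ * Vh = 1) (hσh0 : ∀ i, 0 ≤ σh i)
    (hσhm : ∀ i j, i ≤ j → σh j ≤ σh i) (hB : Qᴴ * A = UB * diagRect σh 0 l l * Vhᴴ) :
    σh k ≤ ‖T‖ := by
  rcases (hσh0 k).eq_or_lt with h0 | hpos
  · rw [← h0]; exact norm_nonneg _
  set e : Fin (k + 1) → Fin l := Fin.castLE hkl with he
  have hinj : Function.Injective e := Fin.castLE_injective hkl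
  set E : Matrix (Fin l) (Fin (k + 1)) ℂ := (1 : Matrix (Fin l) (Fin l) ℂ).submatrix id e with hE
  have hEE : Eᴴ * E = 1 := by
    have : Eᴴ * E = (1 : Matrix (Fin l) (Fin l) ℂ).submatrix e e := by
      rw [hE, conjTranspose_submatrix, conjTranspose_one, ← submatrix_mul _ _ e id e
        Function.bijective_id, Matrix.one_mul]
    rw [this, submatrix_one _ hinj]
  have hEapp : ∀ x j, E x j = if x = e j then 1 else 0 := fun x j => by
    rw [hE, submatrix_apply, one_apply]
    rfl
  have hDE : diagRect σh 0 l l * E = E * diagonal (fun i : Fin (k + 1) => (σh i : ℂ)) := by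
    ext i j
    rw [mul_diagonal, mul_apply, Finset.sum_eq_single (e j)]
    · have : (i : ℕ) = (j : ℕ) ↔ i = e j := by simp [he, Fin.ext_iff]
      by_cases hij : i = e j
      · simp [hij, hEapp, diagRect, he]
      · have hij' : ¬ i = Fin.castLE hkl j := hij
        simp [hij', hEapp, diagRect, he, this]
    · intro x _ hx
      simp [hEapp, hx]
    · simp
  obtain ⟨z, hz0, hz⟩ := exists_ne_zero_mul_eq_zero (Vkᴴ * (Vh * E))
  have hAx : A * (Vh * E * z) = T * (Vh * E * z) := by
    rw [hA, Matrix.add_mul, Matrix.mul_assoc C, ← Matrix.mul_assoc Vkᴴ, hz, Matrix.mul_zero,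
      zero_add]
  have hUE : (UB * E)ᴴ * (UB * E) = 1 := by
    rw [conjTranspose_mul, Matrix.mul_assoc, ← Matrix.mul_assoc UBᴴ, hUB, Matrix.one_mul, hEE]
  have hVE : (Vh * E)ᴴ * (Vh * E) = 1 := by
    rw [conjTranspose_mul, Matrix.mul_assoc, ← Matrix.mul_assoc Vhᴴ, hVh, Matrix.one_mul, hEE]
  have hdz : diagonal (fun i : Fin (k + 1) => (σh i : ℂ)) * z =
      (UB * E)ᴴ * (Qᴴ * (T * (Vh * E * z))) := by
    calc diagonal (fun i : Fin (k + 1) => (σh i : ℂ)) * z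
        = ((UB * E)ᴴ * (UB * E)) * (diagonal (fun i : Fin (k + 1) => (σh i : ℂ)) * z) := by
          rw [hUE, Matrix.one_mul]
      _ = (UB * E)ᴴ * (UB * (E * diagonal (fun i : Fin (k + 1) => (σh i : ℂ))) * z) := by
          simp only [Matrix.mul_assoc]
      _ = (UB * E)ᴴ * (UB * (diagRect σh 0 l l * ((Vhᴴ * Vh) * E)) * z) := by
          rw [← hDE, hVh, Matrix.one_mul]
      _ = (UB * E)ᴴ * ((UB * diagRect σh 0 l l * Vhᴴ) * (Vh * E * z)) := by
          simp only [Matrix.mul_assoc]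
      _ = (UB * E)ᴴ * (Qᴴ * (A * (Vh * E * z))) := by
          rw [← hB]
          simp only [Matrix.mul_assoc]
      _ = _ := by rw [hAx]
  have hne : ∀ i : Fin (k + 1), 0 < σh i := fun i =>
    hpos.trans_le (hσhm _ _ (Nat.lt_succ_iff.1 i.2))
  have hz1 : z = diagonal (fun i : Fin (k + 1) => ((σh i)⁻¹ : ℂ)) *
      (diagonal (fun i : Fin (k + 1) => (σh i : ℂ)) * z) := by
    rw [← Matrix.mul_assoc, diagonal_mul_diagonal]
    have : (fun i : Fin (k + 1) => ((σh i)⁻¹ : ℂ) * (σh i : ℂ)) = fun _ => 1 := by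
      funext i
      exact inv_mul_cancel₀ (by exact_mod_cast (hne i).ne')
    rw [this, diagonal_one, Matrix.one_mul]
  have hinv : ‖diagonal (fun i : Fin (k + 1) => ((σh i)⁻¹ : ℂ))‖ ≤ (σh k)⁻¹ := by
    rw [l2_opNorm_diagonal]
    refine (pi_norm_le_iff_of_nonneg (by positivity)).2 fun i => ?_
    rw [norm_inv, Complex.norm_real, Real.norm_of_nonneg (hσh0 _)]
    exact inv_anti₀ hpos (hσhm _ _ (Nat.lt_succ_iff.1 i.2))
  have hTz : ‖diagonal (fun i : Fin (k + 1) => (σh i : ℂ)) * z‖ ≤ ‖T‖ * ‖z‖ := by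
    rw [hdz]
    refine (l2_opNorm_mul_le_of_le_one_left _ _ ?_).trans
      ((l2_opNorm_mul_le_of_le_one_left _ _ ?_).trans ((l2_opNorm_mul _ _).trans ?_))
    · rw [l2_opNorm_conjTranspose]
      exact l2_opNorm_le_one_of_conjTranspose_mul_self hUE
    · rw [l2_opNorm_conjTranspose]
      exact l2_opNorm_le_one_of_conjTranspose_mul_self hQ
    · gcongr
      exact l2_opNorm_mul_le_of_le_one_left _ _ (l2_opNorm_le_one_of_conjTranspose_mul_self hVE)
  have hzpos : 0 < ‖z‖ := norm_pos_iff.2 hz0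
  have : ‖z‖ ≤ (σh k)⁻¹ * (‖T‖ * ‖z‖) := by
    calc ‖z‖ = ‖diagonal (fun i : Fin (k + 1) => ((σh i)⁻¹ : ℂ)) *
        (diagonal (fun i : Fin (k + 1) => (σh i : ℂ)) * z)‖ := by rw [← hz1]
      _ ≤ _ := (l2_opNorm_mul _ _).trans (by gcongr)
  rw [inv_mul_eq_div, le_div_iff₀ hpos, mul_comm] at this
  exact le_of_mul_le_mul_right this hzpos

end Columns

section Wedin

open scoped Matrix.Norms.L2Operator

/-- A `sin Θ` bound in Schatten norms from a pair of Sylvester-type residual equations. -/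
lemma max_schatten_le_of_residual {m n k : ℕ} {p : ℝ≥0∞} (hp : 1 ≤ p)
    (X : Matrix (Fin m) (Fin k) ℂ) (Y : Matrix (Fin n) (Fin k) ℂ)
    (D D' : Matrix (Fin k) (Fin k) ℂ) (T : Matrix (Fin m) (Fin n) ℂ)
    (R : Matrix (Fin m) (Fin k) ℂ) (S : Matrix (Fin n) (Fin k) ℂ) {s τ e : ℝ}
    (hD : D * D' = 1) (hs : 0 < s) (hD' : ‖D'‖ ≤ s⁻¹) (hT : ‖T‖ ≤ τ) (hτ : τ < s)
    (hX : X * D = T * Y + R) (hY : Y * D = Tᴴ * X + S)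
    (hR : schatten p R ≤ e) (hS : schatten p S ≤ e) :
    max (schatten p X) (schatten p Y) ≤ e / (s - τ) := by
  have key : ∀ {a b : ℕ} (X : Matrix (Fin a) (Fin k) ℂ) (Y : Matrix (Fin b) (Fin k) ℂ)
      (T : Matrix (Fin a) (Fin b) ℂ) (R : Matrix (Fin a) (Fin k) ℂ), ‖T‖ ≤ τ →
      X * D = T * Y + R → schatten p R ≤ e → s * schatten p X ≤ τ * schatten p Y + e := by
    intro a b X Y T R hT hX hR
    have h1 : schatten p X ≤ schatten p (X * D) * s⁻¹ := by
      calc schatten p X = schatten p (X * D * D') := by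
            rw [Matrix.mul_assoc, hD, Matrix.mul_one]
        _ ≤ schatten p (X * D) * ‖D'‖ := schatten_mul_le_right hp _ _
        _ ≤ _ := mul_le_mul_of_nonneg_left hD' (schatten_nonneg hp _)
    have h2 : schatten p (X * D) ≤ τ * schatten p Y + e := by
      rw [hX]
      refine (schatten_add_le hp _ _).trans (add_le_add ?_ hR)
      exact (schatten_mul_le_left hp _ _).trans
        (mul_le_mul_of_nonneg_right hT (schatten_nonneg hp _))
    rw [← div_eq_mul_inv, le_div_iff₀ hs] at h1
    linarith
  have h1 := key X Y T R hT hX hR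
  have h2 := key Y X Tᴴ S (by rwa [l2_opNorm_conjTranspose]) hY hS
  have hτ0 : 0 ≤ τ := (norm_nonneg T).trans hT
  rw [le_div_iff₀ (sub_pos.2 hτ)]
  rcases le_total (schatten p X) (schatten p Y) with h | h
  · rw [max_eq_right h]
    nlinarith
  · rw [max_eq_left h]
    nlinarith

/-- Residual bounds for a projector `P` under which the leading left singular block is a multiple
of the trailing one. -/
lemma schatten_residual_le {m n k c d : ℕ} {p : ℝ≥0∞} (hp : 1 ≤ p)
    {P : Matrix (Fin m) (Fin m) ℂ} {Uk : Matrix (Fin m) (Fin k) ℂ} {Up : Matrix (Fin m) (Fin c) ℂ}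
    {Vk : Matrix (Fin n) (Fin k) ℂ} {Vp : Matrix (Fin n) (Fin d) ℂ}
    {D D' : Matrix (Fin k) (Fin k) ℂ} {Sp : Matrix (Fin c) (Fin d) ℂ}
    {L : Matrix (Fin d) (Fin k) ℂ} {s η : ℝ}
    (hPH : Pᴴ = P) (hP : ‖P‖ ≤ 1) (hUk : Ukᴴ * Uk = 1) (hUp : Upᴴ * Up = 1)
    (hVk : Vkᴴ * Vk = 1) (hVp : Vpᴴ * Vp = 1) (hVkp : Vkᴴ * Vp = 0) (hVpk : Vpᴴ * Vk = 0)
    (hD : D * D' = 1) (hs : 0 < s) (hD' : ‖D'‖ ≤ s⁻¹) (hSp : ‖Sp‖ ≤ s) (hL : ‖L‖ ≤ η)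
    (hPU : P * Uk * D = -(P * Up * Sp * L)) :
    schatten p (P * (Uk * D * Vkᴴ + Up * Sp * Vpᴴ) * Vk) ≤ √2 * schatten p Sp * η ∧
    schatten p ((Uk * D * Vkᴴ + Up * Sp * Vpᴴ)ᴴ * P * Uk) ≤ √2 * schatten p Sp * η := by
  have hη : 0 ≤ η := (norm_nonneg L).trans hL
  have hUk1 := l2_opNorm_le_one_of_conjTranspose_mul_self hUk
  have hUp1 := l2_opNorm_le_one_of_conjTranspose_mul_self hUp
  have hPUp : ‖P * Up‖ ≤ 1 := (l2_opNorm_mul_le_of_le_one_left _ _ hP).trans hUp1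
  have hSp0 : 0 ≤ schatten p Sp := schatten_nonneg hp Sp
  have h2 : 1 ≤ √2 := Real.one_le_sqrt.2 (by norm_num)
  constructor
  · have h : P * (Uk * D * Vkᴴ + Up * Sp * Vpᴴ) * Vk = (P * Up) * Sp * (-L) := by
      calc P * (Uk * D * Vkᴴ + Up * Sp * Vpᴴ) * Vk
          = P * Uk * D * (Vkᴴ * Vk) + P * Up * Sp * (Vpᴴ * Vk) := by
            simp only [Matrix.mul_add, Matrix.add_mul, Matrix.mul_assoc]
        _ = _ := by rw [hVk, hVpk, Matrix.mul_one, Matrix.mul_zero, add_zero, hPU, Matrix.mul_neg]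
    rw [h]
    calc _ ≤ ‖P * Up‖ * schatten p Sp * ‖-L‖ := schatten_mul_mul_le hp _ _ _
      _ ≤ √2 * schatten p Sp * η := by
        rw [norm_neg]
        gcongr
        exact hPUp.trans h2
  · set N := Ukᴴ * P * Up with hN
    set F := Vpᴴ - L * Vkᴴ with hF
    have h : (Uk * D * Vkᴴ + Up * Sp * Vpᴴ)ᴴ * P * Uk = Fᴴ * Spᴴ * Nᴴ := by
      have h1 : Ukᴴ * P * (Uk * D * Vkᴴ + Up * Sp * Vpᴴ) = N * Sp * F := by
        calc Ukᴴ * P * (Uk * D * Vkᴴ + Up * Sp * Vpᴴ)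
            = Ukᴴ * (P * Uk * D) * Vkᴴ + Ukᴴ * (P * Up * Sp) * Vpᴴ := by
              simp only [Matrix.mul_add, Matrix.mul_assoc]
          _ = _ := by
              rw [hPU, hN, hF]
              simp only [Matrix.mul_sub, Matrix.mul_neg, Matrix.neg_mul, Matrix.mul_assoc]
              abel
      calc _ = (Ukᴴ * P * (Uk * D * Vkᴴ + Up * Sp * Vpᴴ))ᴴ := by
            rw [conjTranspose_mul (Ukᴴ * P), conjTranspose_mul Ukᴴ, conjTranspose_conjTranspose,
              hPH, Matrix.mul_assoc]
        _ = _ := by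
            rw [h1, conjTranspose_mul, conjTranspose_mul, Matrix.mul_assoc]
    have hN1 : ‖N‖ ≤ 1 := by
      rw [hN, Matrix.mul_assoc]
      refine (l2_opNorm_mul_le_of_le_one_left _ _ ?_).trans hPUp
      rwa [l2_opNorm_conjTranspose]
    have hNη : ‖N‖ ≤ η := by
      have h1 : ‖P * Uk‖ ≤ η := by
        have : P * Uk = -(P * Up * Sp * L) * D' := by
          rw [← hPU, Matrix.mul_assoc, hD, Matrix.mul_one]
        rw [this, Matrix.neg_mul, norm_neg]
        calc ‖P * Up * Sp * L * D'‖ ≤ ‖P * Up‖ * ‖Sp‖ * ‖L‖ * ‖D'‖ := by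
              refine (l2_opNorm_mul _ _).trans ?_
              gcongr
              refine (l2_opNorm_mul _ _).trans ?_
              gcongr
              exact l2_opNorm_mul _ _
          _ ≤ 1 * s * η * s⁻¹ := by gcongr
          _ = η := by field_simp
      have h2 : ‖Ukᴴ * P‖ ≤ η := by
        have : Ukᴴ * P = (P * Uk)ᴴ := by rw [conjTranspose_mul, hPH]
        rwa [this, l2_opNorm_conjTranspose]
      exact (l2_opNorm_mul_le_of_le_one_right _ _ hUp1).trans h2
    have hF2 : ‖F‖ ^ 2 ≤ 1 + η ^ 2 := by
      have h1 : F * Fᴴ = 1 + L * Lᴴ := by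
        have : Fᴴ = Vp - Vk * Lᴴ := by
          rw [hF, conjTranspose_sub, conjTranspose_mul, conjTranspose_conjTranspose,
            conjTranspose_conjTranspose]
        rw [this, hF]
        calc (Vpᴴ - L * Vkᴴ) * (Vp - Vk * Lᴴ)
            = Vpᴴ * Vp - (Vpᴴ * Vk) * Lᴴ - L * (Vkᴴ * Vp) + L * (Vkᴴ * Vk) * Lᴴ := by
              simp only [Matrix.sub_mul, Matrix.mul_sub, Matrix.mul_assoc]
              abel
          _ = _ := by
              rw [hVp, hVpk, hVkp, hVk, Matrix.zero_mul, Matrix.mul_zero, Matrix.mul_one]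
              abel
      have h3 := l2_opNorm_conjTranspose_mul_self Fᴴ
      rw [conjTranspose_conjTranspose, h1, l2_opNorm_conjTranspose, ← sq] at h3
      rw [← h3]
      refine (norm_add_le _ _).trans (add_le_add l2_opNorm_one_le ?_)
      refine (l2_opNorm_mul _ _).trans ?_
      rw [l2_opNorm_conjTranspose, ← sq]
      gcongr
    have hFN : ‖F‖ * ‖N‖ ≤ √2 * η := by
      refine le_of_sq_le_sq ?_ (by positivity)
      rw [mul_pow, mul_pow, Real.sq_sqrt (by norm_num : (0 : ℝ) ≤ 2)]
      have hN0 := norm_nonneg N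
      rcases le_total η 1 with hle | hle
      · have : ‖N‖ ^ 2 ≤ η ^ 2 := by gcongr
        have : ‖F‖ ^ 2 ≤ 2 := by nlinarith
        gcongr
      · have h4 : ‖N‖ ^ 2 ≤ 1 := by nlinarith
        have h5 : ‖F‖ ^ 2 * ‖N‖ ^ 2 ≤ (1 + η ^ 2) * 1 := by gcongr
        nlinarith
    rw [h]
    calc _ ≤ ‖Fᴴ‖ * schatten p Spᴴ * ‖Nᴴ‖ := schatten_mul_mul_le hp _ _ _
      _ ≤ ‖F‖ * schatten p Sp * ‖N‖ := by
        rw [l2_opNorm_conjTranspose, l2_opNorm_conjTranspose]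
        gcongr
        exact schatten_conjTranspose_le hp Sp
      _ = ‖F‖ * ‖N‖ * schatten p Sp := by ring
      _ ≤ √2 * η * schatten p Sp := by gcongr
      _ = _ := by ring

end Wedin

section SubspaceIteration

open scoped Matrix.Norms.L2Operator

lemma pow_mul_self_block {m n k c d : ℕ} {Uk : Matrix (Fin m) (Fin k) ℂ}
    {Up : Matrix (Fin m) (Fin c) ℂ} {Vk : Matrix (Fin n) (Fin k) ℂ} {Vp : Matrix (Fin n) (Fin d) ℂ}
    (D : Matrix (Fin k) (Fin k) ℂ) (Sp : Matrix (Fin c) (Fin d) ℂ) (hUk : Ukᴴ * Uk = 1)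
    (hUp : Upᴴ * Up = 1) (hUkp : Ukᴴ * Up = 0) (hUpk : Upᴴ * Uk = 0) (hVk : Vkᴴ * Vk = 1)
    (hVp : Vpᴴ * Vp = 1) (hVkp : Vkᴴ * Vp = 0) (hVpk : Vpᴴ * Vk = 0)
    {A : Matrix (Fin m) (Fin n) ℂ} (hA : A = Uk * D * Vkᴴ + Up * Sp * Vpᴴ) (q : ℕ) :
    (A * Aᴴ) ^ q * A = Uk * (D * (Dᴴ * D) ^ q) * Vkᴴ + Up * (Sp * (Spᴴ * Sp) ^ q) * Vpᴴ := by
  have hAA : Aᴴ * A = Vk * (Dᴴ * D) * Vkᴴ + Vp * (Spᴴ * Sp) * Vpᴴ := by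
    calc Aᴴ * A = Vk * Dᴴ * (Ukᴴ * Uk) * D * Vkᴴ + Vp * Spᴴ * (Upᴴ * Up) * Sp * Vpᴴ
          + Vk * Dᴴ * (Ukᴴ * Up) * Sp * Vpᴴ + Vp * Spᴴ * (Upᴴ * Uk) * D * Vkᴴ := by
          rw [hA]
          simp only [conjTranspose_add, conjTranspose_mul, conjTranspose_conjTranspose,
            Matrix.mul_add, Matrix.add_mul, Matrix.mul_assoc]
          abel
      _ = _ := by
          rw [hUk, hUp, hUkp, hUpk]
          simp only [Matrix.mul_zero, Matrix.zero_mul, Matrix.mul_one, add_zero, Matrix.mul_assoc]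
  induction q with
  | zero => simp [hA]
  | succ q ih =>
    have hcomm : (A * Aᴴ) ^ (q + 1) * A = (A * Aᴴ) ^ q * A * (Aᴴ * A) := by
      rw [pow_succ]
      simp only [Matrix.mul_assoc]
    rw [hcomm, ih, hAA, pow_succ, pow_succ]
    generalize (Dᴴ * D) ^ q = X
    generalize (Spᴴ * Sp) ^ q = Y
    calc _ = Uk * (D * X) * (Vkᴴ * Vk) * (Dᴴ * D) * Vkᴴ
          + Up * (Sp * Y) * (Vpᴴ * Vp) * (Spᴴ * Sp) * Vpᴴ
          + Uk * (D * X) * (Vkᴴ * Vp) * (Spᴴ * Sp) * Vpᴴ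
          + Up * (Sp * Y) * (Vpᴴ * Vk) * (Dᴴ * D) * Vkᴴ := by
          simp only [Matrix.mul_add, Matrix.add_mul, Matrix.mul_assoc]
          abel
      _ = _ := by
          rw [hVk, hVp, hVkp, hVpk]
          simp only [Matrix.mul_zero, Matrix.zero_mul, Matrix.mul_one, add_zero, Matrix.mul_assoc]

lemma l2_opNorm_conjTranspose_mul_self_pow_mul_le {c d l : Type*} [Fintype c] [Fintype d]
    [Fintype l] [DecidableEq c] [DecidableEq d] [DecidableEq l] (S : Matrix c d ℂ)
    (G : Matrix d l ℂ) (q : ℕ) : ‖(Sᴴ * S) ^ q * G‖ ≤ ‖S‖ ^ (2 * q) * ‖G‖ := by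
  induction q with
  | zero => simp
  | succ q ih =>
    rw [pow_succ', Matrix.mul_assoc]
    refine (l2_opNorm_mul _ _).trans ?_
    rw [l2_opNorm_conjTranspose_mul_self]
    calc _ ≤ ‖S‖ * ‖S‖ * (‖S‖ ^ (2 * q) * ‖G‖) := by gcongr
      _ = _ := by ring

end SubspaceIteration

/-- Theorem 3.5 (unitarily invariant / Schatten-p norms): accuracy of the extracted
rank-k singular subspaces. -/
theorem schatten_angles_truncated
    {k m₂ n₂ ρ : ℕ} (q : ℕ) (hk : 1 ≤ k)
    (A : Matrix (Fin (k + m₂)) (Fin (k + n₂)) ℂ)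
    (U : Matrix (Fin (k + m₂)) (Fin (k + m₂)) ℂ)
    (V : Matrix (Fin (k + n₂)) (Fin (k + n₂)) ℂ)
    (σ : ℕ → ℝ)
    (hU : Uᴴ * U = 1) (hU' : U * Uᴴ = 1)
    (hV : Vᴴ * V = 1) (hV' : V * Vᴴ = 1)
    (hσ0 : ∀ i, 0 ≤ σ i) (hσm : ∀ i j, i ≤ j → σ j ≤ σ i)
    (hA : A = U * diagRect σ 0 (k + m₂) (k + n₂) * Vᴴ)
    (hrank : 0 < σ (k - 1)) (hgap : σ k < σ (k - 1))
    (Ω : Matrix (Fin (k + n₂)) (Fin (k + ρ)) ℂ)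
    (hΩ : ((colsL V)ᴴ * Ω).rank = k)
    (Q : Matrix (Fin (k + m₂)) (Fin (k + ρ)) ℂ)
    (R : Matrix (Fin (k + ρ)) (Fin (k + ρ)) ℂ)
    (hQ : Qᴴ * Q = 1) (hR : R.BlockTriangular id)
    (hQR : (A * Aᴴ) ^ q * A * Ω = Q * R)
    (UB : Matrix (Fin (k + ρ)) (Fin (k + ρ)) ℂ)
    (Vh : Matrix (Fin (k + n₂)) (Fin (k + ρ)) ℂ)
    (σh : ℕ → ℝ)
    (hUB : UBᴴ * UB = 1) (hUB' : UB * UBᴴ = 1)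
    (hVh : Vhᴴ * Vh = 1)
    (hσh0 : ∀ i, 0 ≤ σh i) (hσhm : ∀ i j, i ≤ j → σh j ≤ σh i)
    (hB : Qᴴ * A = UB * diagRect σh 0 (k + ρ) (k + ρ) * Vhᴴ)
    :
    ∀ p : ℝ≥0∞, 1 ≤ p →
      max (schatten p ((1 - colsL (Q * UB) * (colsL (Q * UB))ᴴ) * colsL U)) (schatten p ((1 - colsL Vh * (colsL Vh)ᴴ) * colsL V)) ≤
        Real.sqrt 2 * ((σ k / σ (k - 1)) ^ (2 * q) / (1 - (σ k / σ (k - 1)))) *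
          (schatten p (diagRect σ k m₂ n₂) / σ (k - 1)) * sval ((colsR V)ᴴ * Ω * rpinv ((colsL V)ᴴ * Ω)) 0 := by
  open scoped Matrix.Norms.L2Operator in
  intro p hp
  -- block notation
  set s := σ (k - 1) with hs
  set Uk := colsL U with hUkdef
  set Up := colsR U with hUpdef
  set Vk := colsL V with hVkdef
  set Vp := colsR V with hVpdef
  set D : Matrix (Fin k) (Fin k) ℂ := diagonal (fun i : Fin k => (σ i : ℂ)) with hDdef
  set Sp := diagRect σ k m₂ n₂ with hSpdef
  set Uh := colsL (Q * UB) with hUhdef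
  set Vhk := colsL Vh with hVhkdef
  have hUk : Ukᴴ * Uk = 1 := conjTranspose_colsL_mul_colsL hU
  have hUp : Upᴴ * Up = 1 := conjTranspose_colsR_mul_colsR hU
  have hUkp : Ukᴴ * Up = 0 := conjTranspose_colsL_mul_colsR hU
  have hUpk : Upᴴ * Uk = 0 := conjTranspose_colsR_mul_colsL hU
  have hVk : Vkᴴ * Vk = 1 := conjTranspose_colsL_mul_colsL hV
  have hVp : Vpᴴ * Vp = 1 := conjTranspose_colsR_mul_colsR hV
  have hVkp : Vkᴴ * Vp = 0 := conjTranspose_colsL_mul_colsR hV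
  have hVpk : Vpᴴ * Vk = 0 := conjTranspose_colsR_mul_colsL hV
  have hQU : (Q * UB)ᴴ * (Q * UB) = 1 := by
    rw [conjTranspose_mul, Matrix.mul_assoc, ← Matrix.mul_assoc Qᴴ, hQ, Matrix.one_mul, hUB]
  have hUh : Uhᴴ * Uh = 1 := conjTranspose_colsL_mul_colsL hQU
  have hUhr : Uhᴴ * colsR (Q * UB) = 0 := conjTranspose_colsL_mul_colsR hQU
  have hVhk : Vhkᴴ * Vhk = 1 := conjTranspose_colsL_mul_colsL hVh
  have hVhrk : (colsR Vh)ᴴ * Vhk = 0 := conjTranspose_colsR_mul_colsL hVh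
  have hAb : A = Uk * D * Vkᴴ + Up * Sp * Vpᴴ := by
    rw [hA, mul_diagRect_mul_conjTranspose]
  have hσpos : ∀ i : Fin k, s ≤ σ i := fun i => hσm _ _ (by omega)
  have hSpk : ‖Sp‖ ≤ σ k := l2_opNorm_diagRect_le hσ0 hσm k m₂ n₂
  -- inverse powers of the leading block
  have hDH : Dᴴ = D := by
    rw [hDdef, diagonal_conjTranspose]
    congr 1
    funext i
    simp
  have hpowD : ∀ r : ℕ, D ^ r * diagonal (fun i : Fin k => (((σ i)⁻¹ ^ r : ℝ) : ℂ)) = 1 := by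
    intro r
    rw [hDdef, diagonal_pow, diagonal_mul_diagonal, ← diagonal_one]
    congr 1
    funext i
    have : (σ i : ℂ) ≠ 0 := by exact_mod_cast (hrank.trans_le (hσpos i)).ne'
    simp [this]
  have hnormD : ∀ r : ℕ, ‖diagonal (fun i : Fin k => (((σ i)⁻¹ ^ r : ℝ) : ℂ))‖ ≤ s⁻¹ ^ r := by
    intro r
    rw [l2_opNorm_diagonal]
    refine (pi_norm_le_iff_of_nonneg (by positivity)).2 fun i => ?_
    have := hrank.trans_le (hσpos i)
    rw [Complex.norm_real, Real.norm_of_nonneg (by positivity)]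
    gcongr
    exact hσpos i
  set D' := diagonal (fun i : Fin k => (((σ i)⁻¹ ^ 1 : ℝ) : ℂ)) with hD'def
  have hD : D * D' = 1 := (congrArg (· * D') (pow_one D)).symm.trans (hpowD 1)
  have hD' : ‖D'‖ ≤ s⁻¹ := (hnormD 1).trans_eq (pow_one _)
  -- the starting-guess quantity
  set Om := Vpᴴ * Ω * rpinv (Vkᴴ * Ω) with hOm
  set J := diagonal (fun i : Fin k => (((σ i)⁻¹ ^ (2 * q) : ℝ) : ℂ)) with hJ
  set L := (Spᴴ * Sp) ^ q * (Om * J) with hLdef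
  set η := (σ k / s) ^ (2 * q) * sval Om 0 with hη
  have hOm0 : ‖Om‖ ≤ sval Om 0 := l2_opNorm_le_sval_zero Om
  have hL : ‖L‖ ≤ η := by
    calc ‖L‖ ≤ ‖Sp‖ ^ (2 * q) * (‖Om‖ * ‖J‖) :=
          (l2_opNorm_conjTranspose_mul_self_pow_mul_le _ _ _).trans
            (mul_le_mul_of_nonneg_left (l2_opNorm_mul _ _) (by positivity))
      _ ≤ σ k ^ (2 * q) * (sval Om 0 * s⁻¹ ^ (2 * q)) := by
          have hJn := hnormD (2 * q)
          have h0 : 0 ≤ sval Om 0 := (norm_nonneg _).trans hOm0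
          have hk0 := hσ0 k
          gcongr
      _ = η := by
          rw [hη, div_pow, inv_pow]
          field_simp
  set P := 1 - Q * Qᴴ with hPdef
  have hPH : Pᴴ = P := by
    rw [hPdef, conjTranspose_sub, conjTranspose_one, conjTranspose_mul,
      conjTranspose_conjTranspose]
  have hP1 : ‖P‖ ≤ 1 := l2_opNorm_one_sub_mul_conjTranspose_le hQ
  have hPQ : P * Q = 0 := by
    rw [hPdef, Matrix.sub_mul, Matrix.one_mul, Matrix.mul_assoc, hQ, Matrix.mul_one, sub_self]
  have hPU : P * Uk * D = -(P * Up * Sp * L) := by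
    have h0 : P * ((A * Aᴴ) ^ q * A * Ω) * rpinv (Vkᴴ * Ω) * J = 0 := by
      rw [hQR, ← Matrix.mul_assoc P, hPQ]
      simp only [Matrix.zero_mul]
    rw [pow_mul_self_block D Sp hUk hUp hUkp hUpk hVk hVp hVkp hVpk hAb q] at h0
    have hDq : (Dᴴ * D) ^ q * J = 1 := by
      rw [hDH, ← sq, ← pow_mul]
      exact hpowD _
    have h1 : P * ((Uk * (D * (Dᴴ * D) ^ q) * Vkᴴ + Up * (Sp * (Spᴴ * Sp) ^ q) * Vpᴴ) * Ω) *
        rpinv (Vkᴴ * Ω) * J =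
        P * Uk * D * ((Dᴴ * D) ^ q * ((Vkᴴ * Ω * rpinv (Vkᴴ * Ω)) * J)) + P * Up * Sp * L := by
      rw [hLdef, hOm]
      simp only [Matrix.mul_add, Matrix.add_mul, Matrix.mul_assoc]
    rw [h1, mul_rpinv hΩ, Matrix.one_mul, hDq, Matrix.mul_one] at h0
    exact eq_neg_of_add_eq_zero_left h0
  obtain ⟨hR, hS⟩ := schatten_residual_le hp hPH hP1 hUk hUp hVk hVp hVkp hVpk hD hrank hD'
    (hSpk.trans hgap.le) hL hPU
  rw [← hAb] at hR hS
  -- the computed factorization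
  set T := colsR (Q * UB) * diagRect σh k ρ ρ * (colsR Vh)ᴴ with hTdef
  have hQA : Q * Qᴴ * A = Uh * diagonal (fun i : Fin k => (σh i : ℂ)) * Vhkᴴ + T := by
    rw [Matrix.mul_assoc, hB, ← Matrix.mul_assoc, ← Matrix.mul_assoc,
      mul_diagRect_mul_conjTranspose]
  have hT : ‖T‖ ≤ σ k := by
    have h1 : ‖diagRect σh k ρ ρ‖ ≤ σ k := by
      rcases Nat.eq_zero_or_pos ρ with h0 | hpos
      · subst h0
        have : diagRect σh k 0 0 = 0 := by
          ext i
          exact i.elim0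
        rw [this, norm_zero]
        exact hσ0 k
      · refine (l2_opNorm_diagRect_le hσh0 hσhm k ρ ρ).trans ?_
        refine (compressed_sval_le (by omega) Vk (Uk * D) (Up * Sp * Vpᴴ) hAb hQ hUB hVh hσh0
          hσhm hB).trans ?_
        refine (l2_opNorm_mul_le_of_le_one_right _ _ ?_).trans
          ((l2_opNorm_mul_le_of_le_one_left _ _ ?_).trans hSpk)
        · rw [l2_opNorm_conjTranspose]
          exact l2_opNorm_le_one_of_conjTranspose_mul_self hVp
        · exact l2_opNorm_le_one_of_conjTranspose_mul_self hUp
    refine (l2_opNorm_mul_le_of_le_one_right _ _ ?_).trans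
      ((l2_opNorm_mul_le_of_le_one_left _ _ ?_).trans h1)
    · rw [l2_opNorm_conjTranspose]
      exact l2_opNorm_le_one_of_conjTranspose_mul_self (conjTranspose_colsR_mul_colsR hVh)
    · exact l2_opNorm_le_one_of_conjTranspose_mul_self (conjTranspose_colsR_mul_colsR hQU)
  set Pu := 1 - Uh * Uhᴴ with hPu
  set Pv := 1 - Vhk * Vhkᴴ with hPv
  have hPu1 : ‖Pu‖ ≤ 1 := l2_opNorm_one_sub_mul_conjTranspose_le hUh
  have hPv1 : ‖Pv‖ ≤ 1 := l2_opNorm_one_sub_mul_conjTranspose_le hVhk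
  have hPvH : Pvᴴ = Pv := by
    rw [hPv, conjTranspose_sub, conjTranspose_one, conjTranspose_mul,
      conjTranspose_conjTranspose]
  have hPuH : Puᴴ = Pu := by
    rw [hPu, conjTranspose_sub, conjTranspose_one, conjTranspose_mul,
      conjTranspose_conjTranspose]
  have hPuUh : Pu * Uh = 0 := by
    rw [hPu, Matrix.sub_mul, Matrix.one_mul, Matrix.mul_assoc, hUh, Matrix.mul_one, sub_self]
  have hVhPv : Vhkᴴ * Pv = 0 := by
    rw [hPv, Matrix.mul_sub, Matrix.mul_one, ← Matrix.mul_assoc, hVhk, Matrix.one_mul, sub_self]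
  have hPuT : Pu * T = T := by
    rw [hPu, Matrix.sub_mul, Matrix.one_mul, sub_eq_self, hTdef, Matrix.mul_assoc Uh,
      ← Matrix.mul_assoc Uhᴴ, ← Matrix.mul_assoc Uhᴴ, hUhr]
    simp only [Matrix.zero_mul, Matrix.mul_zero]
  have hTPv : T * Pv = T := by
    rw [hPv, Matrix.mul_sub, Matrix.mul_one, sub_eq_self, hTdef, Matrix.mul_assoc _ _ (Vhk * Vhkᴴ),
      ← Matrix.mul_assoc _ Vhk, hVhrk]
    simp only [Matrix.zero_mul, Matrix.mul_zero]
  have hPuA : Pu * (Q * Qᴴ * A) = T := by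
    rw [hQA, Matrix.mul_add, hPuT, ← Matrix.mul_assoc, ← Matrix.mul_assoc, hPuUh]
    simp only [Matrix.zero_mul, zero_add]
  have hAPv : Q * Qᴴ * A * Pv = T := by
    rw [hQA, Matrix.add_mul, hTPv, Matrix.mul_assoc _ Vhkᴴ, hVhPv]
    simp only [Matrix.mul_zero, zero_add]
  have hsplit : A = Q * Qᴴ * A + P * A := by
    rw [hPdef, Matrix.sub_mul, Matrix.one_mul]
    abel
  have hAVk : A * Vk = Uk * D := by
    rw [hAb, Matrix.add_mul, Matrix.mul_assoc _ Vkᴴ, hVk, Matrix.mul_assoc _ Vpᴴ, hVpk,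
      Matrix.mul_one, Matrix.mul_zero, add_zero]
  have hAUk : Aᴴ * Uk = Vk * D := by
    have h1 : Ukᴴ * A = D * Vkᴴ := by
      rw [hAb, Matrix.mul_add, ← Matrix.mul_assoc, ← Matrix.mul_assoc, hUk, ← Matrix.mul_assoc,
        ← Matrix.mul_assoc, hUkp, Matrix.one_mul, Matrix.zero_mul, Matrix.zero_mul, add_zero]
    have h2 := congrArg conjTranspose h1
    rwa [conjTranspose_mul, conjTranspose_mul, conjTranspose_conjTranspose,
      conjTranspose_conjTranspose, hDH] at h2
  have hX : Pu * Uk * D = T * (Pv * Vk) + Pu * (P * A * Vk) := by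
    calc Pu * Uk * D = Pu * (A * Vk) := by rw [hAVk, Matrix.mul_assoc]
      _ = Pu * ((Q * Qᴴ * A + P * A) * Vk) := by rw [← hsplit]
      _ = (Pu * (Q * Qᴴ * A)) * Vk + Pu * (P * A * Vk) := by
          rw [Matrix.add_mul, Matrix.mul_add, ← Matrix.mul_assoc Pu (Q * Qᴴ * A)]
      _ = _ := by rw [hPuA, ← Matrix.mul_assoc T, hTPv]
  have hY : Pv * Vk * D = Tᴴ * (Pu * Uk) + Pv * (Aᴴ * P * Uk) := by
    calc Pv * Vk * D = Pv * (Aᴴ * Uk) := by rw [hAUk, Matrix.mul_assoc]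
      _ = Pv * ((Q * Qᴴ * A + P * A)ᴴ * Uk) := by rw [← hsplit]
      _ = (Q * Qᴴ * A * Pv)ᴴ * Uk + Pv * (Aᴴ * P * Uk) := by
          rw [conjTranspose_add, Matrix.add_mul, Matrix.mul_add, conjTranspose_mul P A, hPH,
            conjTranspose_mul _ Pv, hPvH, Matrix.mul_assoc Pv]
      _ = (Pu * T)ᴴ * Uk + Pv * (Aᴴ * P * Uk) := by rw [hAPv, hPuT]
      _ = _ := by rw [conjTranspose_mul, hPuH, Matrix.mul_assoc]
  have hR' : schatten p (Pu * (P * A * Vk)) ≤ √2 * schatten p Sp * η :=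
    (schatten_mul_le_left hp _ _).trans
      ((mul_le_of_le_one_left (schatten_nonneg hp _) hPu1).trans hR)
  have hS' : schatten p (Pv * (Aᴴ * P * Uk)) ≤ √2 * schatten p Sp * η :=
    (schatten_mul_le_left hp _ _).trans
      ((mul_le_of_le_one_left (schatten_nonneg hp _) hPv1).trans hS)
  refine (max_schatten_le_of_residual hp (Pu * Uk) (Pv * Vk) D D' T _ _ hD hrank hD' hT hgap hX hY
    hR' hS').trans (le_of_eq ?_)
  have h1 : s - σ k ≠ 0 := (sub_pos.2 hgap).ne'
  have h2 : 1 - σ k / s = (s - σ k) / s := by field_simp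
  rw [h2, hη]
  field_simp
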